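/- arXiv:1310.1042 — 2 statements merged into one kernel-verified Lean document; each statement's English description precedes it below -/
import Mathlib

section
/- For each integer m ≥ 2, there exists a cyclically 4-edge-connected cubic graph of order 8m whose circumference is exactly 7m + 2. -/
open SimpleGraph

/-- A cubic (3-regular) graph. -/
def IsCubic {V : Type*} (G : SimpleGraph V) : Prop := ∀ v, (G.neighborSet v).ncard = 3

/-- A graph contains a cycle. -/
def HasCycle {V : Type*} (G : SimpleGraph V) : Prop := ∃ (u : V) (w : G.Walk u u), w.IsCycle

/-- The circumference of a graph: the length of a longest cycle. -/
noncomputable def circumference {V : Type*} (G : SimpleGraph V) : ℕ :=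
  sSup {n | ∃ (u : V) (w : G.Walk u u), w.IsCycle ∧ w.length = n}

/-- A graph is cyclically k-edge-connected if every edge cut separating two
cycle-containing parts has at least k edges. -/
def CyclicallyEdgeConnected {V : Type*} (G : SimpleGraph V) (k : ℕ) : Prop :=
  ∀ S : Set V, HasCycle (G.induce S) → HasCycle (G.induce Sᶜ) →
    k ≤ {e ∈ G.edgeSet | ∃ a ∈ S, ∃ b ∈ Sᶜ, e = s(a, b)}.ncard

/-!
A connected 2-regular subgraph covering a whole fragment of the chain splits there into a part
reaching only the next fragment and a part reaching only the previous one, because the Petersen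
graph is not Hamiltonian. Two such splits cut the ring into two arcs that the subgraph cannot join,
so at most two fragments are covered completely. A cycle misses a vertex of every other fragment and
has length at most `8m - (m - 2)`.

For connectivity, count the edges of a cut fragment by fragment, together with the links to the next
fragment. A fragment contributing at most one edge lies on one side of the cut. If the cut has fewer
than four edges, at most one fragment contributes more, so one side of the cut lies within a single
fragment, and a cycle on that side forces at least four cut edges after all.
-/

open scoped Finset

/-- The edges of `G` between `S` and its complement. -/
def edgeCut {V : Type*} (G : SimpleGraph V) (S : Set V) : Set (Sym2 V) :=
  {e ∈ G.edgeSet | ∃ a ∈ S, ∃ b ∈ Sᶜ, e = s(a, b)}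

section General

variable {V : Type*} {G : SimpleGraph V}

theorem mk_mem_edgeCut {S : Set V} {a b : V} (hab : G.Adj a b) (h : ¬(a ∈ S ↔ b ∈ S)) :
    s(a, b) ∈ edgeCut G S := by
  refine ⟨hab, ?_⟩
  by_cases ha : a ∈ S
  · exact ⟨a, ha, b, by simpa [ha] using h, rfl⟩
  · exact ⟨b, by simpa [ha] using h, a, ha, Sym2.eq_swap⟩

theorem edgeCut_compl (S : Set V) : edgeCut G Sᶜ = edgeCut G S := by
  ext e
  constructor <;>
    · rintro ⟨he, a, ha, b, hb, rfl⟩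
      exact ⟨he, b, by simpa using hb, a, by simpa using ha, Sym2.eq_swap⟩

theorem card_filter_le_ncard_edgeCut [Finite V] {ι : Type*} [Fintype ι] {p q : ι → V}
    (hadj : ∀ a, G.Adj (p a) (q a)) (hinj : Function.Injective fun a => s(p a, q a)) (S : Set V)
    [DecidablePred fun a => ¬(p a ∈ S ↔ q a ∈ S)] :
    #{a | ¬(p a ∈ S ↔ q a ∈ S)} ≤ (edgeCut G S).ncard := by
  rw [← Set.ncard_coe_finset, ← Set.ncard_image_of_injective _ hinj]
  refine Set.ncard_le_ncard ?_ (Set.toFinite _)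
  rintro _ ⟨a, ha, rfl⟩
  exact mk_mem_edgeCut (hadj a) (by simpa using ha)

theorem mem_of_subgraph_connected {H : G.Subgraph} (hH : H.Connected) {A : Set V}
    (hA : ∀ ⦃u v⦄, H.Adj u v → u ∈ A → v ∈ A) {u v : V} (hu : u ∈ H.verts) (hv : v ∈ H.verts)
    (h : u ∈ A) : v ∈ A := by
  obtain ⟨w⟩ := hH.coe.preconnected ⟨u, hu⟩ ⟨v, hv⟩
  suffices ∀ {x y : H.verts}, H.coe.Walk x y → (x : V) ∈ A → (y : V) ∈ A from this w h
  intro x y w hx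
  induction w with
  | nil => exact hx
  | cons hxy _ ih => exact ih (hA hxy hx)

theorem exists_isCycle_of_isChain {l : List V} (hne : l ≠ []) (hchain : l.IsChain G.Adj)
    (hnodup : l.Nodup) (hlen : 3 ≤ l.length) (hclose : G.Adj (l.getLast hne) (l.head hne)) :
    ∃ (u : V) (w : G.Walk u u), w.IsCycle ∧ w.length = l.length := by
  let p := Walk.ofSupport l hne hchain
  have hp : p.IsPath := .mk' (by simpa [p] using hnodup)
  have hpl : p.length = l.length - 1 := Walk.length_ofSupport hne hchain
  refine ⟨_, .cons hclose p, ?_, by rw [Walk.length_cons, hpl]; lia⟩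
  refine (Walk.cons_isCycle_iff p hclose).2 ⟨hp, fun hmem => ?_⟩
  have := hp.length_eq_one_of_mem_edges (Sym2.eq_swap ▸ hmem)
  lia

theorem mem_tail_support_iff_of_isCycle {u v : V} {w : G.Walk u u} (hw : w.IsCycle) :
    v ∈ w.support.tail ↔ v ∈ w.support := by
  rw [w.mem_support_iff]
  refine ⟨Or.inr, ?_⟩
  rintro (rfl | h)
  exacts [w.end_mem_tail_support hw.not_nil, h]

theorem exists_subset_two_neighbors_of_hasCycle {S : Set V} (h : HasCycle (G.induce S)) :
    ∃ Y ⊆ S, Y.Nonempty ∧ ∀ v ∈ Y, ∃ N ⊆ Y, N ⊆ G.neighborSet v ∧ N.ncard = 2 := by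
  obtain ⟨u, w, hw⟩ := h
  let f := Embedding.induce (G := G) S
  have hc : (w.map f.toHom).IsCycle := hw.map f.injective
  refine ⟨{v | v ∈ (w.map f.toHom).support}, ?_, ⟨_, Walk.start_mem_support _⟩, fun v hv => ?_⟩
  · intro v hv
    obtain ⟨x, -, rfl⟩ := List.mem_map.1 (Walk.support_map f.toHom w ▸ hv)
    exact x.2
  · refine ⟨(w.map f.toHom).toSubgraph.neighborSet v, fun x hx => ?_,
      fun x hx => Subgraph.adj_sub _ hx, hc.ncard_neighborSet_toSubgraph_eq_two hv⟩
    exact (Walk.mem_verts_toSubgraph _).1 (Subgraph.Adj.snd_mem hx)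

end General

theorem eq_of_forall_apply_add_one_eq {m : ℕ} [NeZero m] {α : Type*} {g : ZMod m → α} {i : ZMod m}
    (h : ∀ j, j ≠ i → j + 1 ≠ i → g (j + 1) = g j) {j : ZMod m} (hj : j ≠ i) :
    g j = g (i + 1) := by
  have key : ∀ n, n + 1 < m → g (i + (n + 1 : ℕ)) = g (i + 1) := by
    intro n
    induction n with
    | zero => simp
    | succ n ih =>
      intro hn
      have hne : ∀ k, 0 < k → k < m → i + (k : ZMod m) ≠ i := fun k hk hkm hik => by
        have := Nat.le_of_dvd hk ((ZMod.natCast_eq_zero_iff _ _).1 (add_eq_left.1 hik))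
        lia
      rw [← ih (by lia), Nat.cast_succ, ← add_assoc]
      refine h _ (hne _ (by lia) (by lia)) ?_
      rw [add_assoc, ← Nat.cast_succ]
      exact hne _ (by lia) hn
  have hpos : (j - i).val ≠ 0 := by simpa [sub_eq_zero] using hj
  obtain ⟨n, hn⟩ := Nat.exists_eq_succ_of_ne_zero hpos
  have := key n (by have := ZMod.val_lt (j - i); lia)
  rwa [← Nat.succ_eq_add_one, ← hn, ZMod.natCast_zmod_val, add_sub_cancel] at this

theorem val_add_one_cases {m : ℕ} [NeZero m] (k : ZMod m) :
    (k + 1).val = k.val + 1 ∨ (k + 1).val = 0 ∧ k.val + 1 = m := by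
  have hk := k.val_lt
  have hcast : (k + 1).val = (k.val + 1) % m := by
    rw [← ZMod.val_natCast, Nat.cast_add_one, ZMod.natCast_zmod_val]
  obtain h | h : k.val + 1 < m ∨ k.val + 1 = m := by lia
  · exact .inl (by rw [hcast, Nat.mod_eq_of_lt h])
  · exact .inr ⟨by rw [hcast, h, Nat.mod_self], h⟩

/-- The circular chain of `m` copies of `F`, indexed by `ZMod m`: for every `i` and every pair
with `L x y`, the vertex `x` of the `i`-th copy is joined to the vertex `y` of the next copy. -/
def circularChain {W : Type*} (m : ℕ) (F : SimpleGraph W) (L : W → W → Prop) :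
    SimpleGraph (ZMod m × W) :=
  fromRel fun u v => u.1 = v.1 ∧ F.Adj u.2 v.2 ∨ v.1 = u.1 + 1 ∧ L u.2 v.2

section CircularChain

variable {W : Type*} {m : ℕ} {F : SimpleGraph W} {L : W → W → Prop}

theorem circularChain_adj_inner {x y : W} (i : ZMod m) (h : F.Adj x y) :
    (circularChain m F L).Adj (i, x) (i, y) := by
  simp [circularChain, h, h.ne]

theorem circularChain_adj_link [Nontrivial (ZMod m)] {x y : W} (i : ZMod m) (h : L x y) :
    (circularChain m F L).Adj (i, x) (i + 1, y) := by
  simp [circularChain, h]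

theorem circularChain_adj_cases {i j : ZMod m} {x y : W}
    (h : (circularChain m F L).Adj (i, x) (j, y)) :
    j = i ∧ F.Adj x y ∨ j = i + 1 ∧ L x y ∨ i = j + 1 ∧ L y x := by
  obtain ⟨-, (⟨hij, h⟩ | h) | ⟨hij, h⟩ | h⟩ := h
  exacts [.inl ⟨hij.symm, h⟩, .inr (.inl h), .inl ⟨hij, h.symm⟩, .inr (.inr h)]

theorem circularChain_adj_same [Nontrivial (ZMod m)] {i : ZMod m} {x y : W} :
    (circularChain m F L).Adj (i, x) (i, y) ↔ F.Adj x y := by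
  refine ⟨fun h => ?_, circularChain_adj_inner i⟩
  simpa using circularChain_adj_cases h

theorem mem_of_connected_circularChain {H : (circularChain m F L).Subgraph} (hH : H.Connected)
    {A : Set (ZMod m × W)}
    (inner : ∀ i x y, H.Adj (i, x) (i, y) → (i, x) ∈ A → (i, y) ∈ A)
    (link : ∀ i x y, L x y → H.Adj (i, x) (i + 1, y) → ((i, x) ∈ A ↔ (i + 1, y) ∈ A))
    {u v : ZMod m × W} (hu : u ∈ H.verts) (hv : v ∈ H.verts) (h : u ∈ A) : v ∈ A := by
  refine mem_of_subgraph_connected hH ?_ hu hv h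
  rintro ⟨i, x⟩ ⟨j, y⟩ hadj
  obtain ⟨rfl, -⟩ | ⟨rfl, hL⟩ | ⟨rfl, hL⟩ := circularChain_adj_cases hadj.adj_sub
  exacts [inner _ _ _ hadj, (link _ _ _ hL hadj).1, (link _ _ _ hL hadj.symm).2]

/-- Inside the `i`-th copy of a circular chain, the subgraph `H` falls apart into a right part `R`,
which contains the ends of its links to the next copy, and a left part `Rᶜ`, which contains the
ends of its links to the previous copy. -/
structure SplitsAt (H : (circularChain m F L).Subgraph) (i : ZMod m) (R : Set W) : Prop where
  mem_of_inner : ∀ ⦃x y⦄, H.Adj (i, x) (i, y) → x ∈ R → y ∈ R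
  mem_of_next : ∀ ⦃x y⦄, L x y → H.Adj (i, x) (i + 1, y) → x ∈ R
  notMem_of_prev : ∀ ⦃j x y⦄, L x y → j + 1 = i → H.Adj (j, x) (i, y) → y ∉ R

/-- The part of a circular chain strictly between copies `i` and `j`, completed by `R` in
copy `i` and by the complement of `R'` in copy `j`. -/
def chainArc (i j : ZMod m) (R R' : Set W) : Set (ZMod m × W) :=
  {v | (i.val < v.1.val ∧ v.1.val < j.val) ∨ (v.1 = i ∧ v.2 ∈ R) ∨ (v.1 = j ∧ v.2 ∉ R')}

variable [NeZero m] {H : (circularChain m F L).Subgraph}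

-- `H` could leave the arc only through the copies `i` and `j`, where the splittings prevent it.
theorem mem_chainArc_of_connected (hH : H.Connected) {i j : ZMod m} {R R' : Set W}
    (hij : i.val < j.val) (hi : SplitsAt H i R) (hj : SplitsAt H j R') {u v : ZMod m × W}
    (hu : u ∈ H.verts) (hv : v ∈ H.verts) (h : u ∈ chainArc i j R R') : v ∈ chainArc i j R R' := by
  have hne : i ≠ j := fun h => by simp [h] at hij
  refine mem_of_connected_circularChain hH ?_ ?_ hu hv h
  · rintro k x y hxy (hk | ⟨rfl, hx⟩ | ⟨rfl, hx⟩)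
    · exact .inl hk
    · exact .inr (.inl ⟨rfl, hi.mem_of_inner hxy hx⟩)
    · exact .inr (.inr ⟨rfl, fun hy => hx (hj.mem_of_inner hxy.symm hy)⟩)
  · intro k x y hL hxy
    have hki : k = i → x ∈ R := by rintro rfl; exact hi.mem_of_next hL hxy
    have hkj : k = j → x ∈ R' := by rintro rfl; exact hj.mem_of_next hL hxy
    have hki' : k + 1 = i → y ∉ R := by rintro rfl; exact hi.notMem_of_prev hL rfl hxy
    have hkj' : k + 1 = j → y ∉ R' := by rintro rfl; exact hj.notMem_of_prev hL rfl hxy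
    have hval := val_add_one_cases k
    have hjm := j.val_lt
    simp only [chainArc, Set.mem_ofPred_eq]
    simp only [← (ZMod.val_injective m).eq_iff] at hki hkj hki' hkj' ⊢
    grind

theorem card_splitsAt_le_two (hH : H.Connected) {s : Finset (ZMod m)}
    (hs : ∀ i ∈ s, (∃ x, (i, x) ∈ H.verts) ∧ ∃ R, SplitsAt H i R) : #s ≤ 2 := by
  have no_three : ∀ i ∈ s, ∀ j ∈ s, ∀ k ∈ s, i.val < j.val → ¬j.val < k.val := by
    intro i hi j hj k hk hij hjk
    obtain ⟨⟨x, hx⟩, R, hR⟩ := hs i hi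
    obtain ⟨⟨y, hy⟩, R', hR'⟩ := hs j hj
    obtain ⟨⟨z, hz⟩, R'', hR''⟩ := hs k hk
    have hki : k ≠ i := by rintro rfl; lia
    have hyR : y ∈ R' := by
      by_contra hyR
      have := mem_chainArc_of_connected hH hij hR hR' hy hz (.inr (.inr ⟨rfl, hyR⟩))
      simp only [chainArc, Set.mem_ofPred_eq] at this
      grind
    have := mem_chainArc_of_connected hH hjk hR' hR'' hy hx (.inr (.inl ⟨rfl, hyR⟩))
    simp only [chainArc, Set.mem_ofPred_eq] at this
    grind
  by_contra! hcard
  obtain ⟨a, ha, b, hb, c, hc, hab, hac, hbc⟩ := Finset.two_lt_card.1 hcard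
  simp only [ne_eq, ← (ZMod.val_injective m).eq_iff] at hab hac hbc
  grind

end CircularChain

/-- The edges of `fragment`. -/
def fragmentEdge : Fin 10 → Fin 8 × Fin 8 :=
  ![(0, 4), (0, 7), (1, 5), (1, 6), (2, 4), (2, 5), (3, 6), (3, 7), (4, 6), (5, 7)]

/-- The Petersen graph minus two adjacent vertices. The former neighbours of one of the two removed
vertices are `0` and `1`, those of the other one are `2` and `3`. -/
def fragment : SimpleGraph (Fin 8) := fromRel fun x y => ∃ k, fragmentEdge k = (x, y)

instance : DecidableRel fragment.Adj := fun x y =>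
  inferInstanceAs (Decidable (x ≠ y ∧ ((∃ _, _) ∨ ∃ _, _)))

/-- The pairs `(x, y)` such that vertex `x` of a fragment is joined to vertex `y` of the next
fragment in `petersenChain`. -/
def linkEdge : Fin 2 → Fin 8 × Fin 8 := ![(2, 0), (3, 1)]

/-- The linking relation of `petersenChain`. -/
def Link (x y : Fin 8) : Prop := ∃ k, linkEdge k = (x, y)

instance : DecidableRel Link := fun _ _ => inferInstanceAs (Decidable (∃ _, _))

/-- The number of edges of `fragment` whose ends have different colours. -/
def innerCut (c : Fin 8 → Bool) : ℕ := #{k | c (fragmentEdge k).1 ≠ c (fragmentEdge k).2}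

/-- The number of selected edges of `fragment` at the vertex `x`. -/
def selectedDegree (e : Fin 10 → Bool) (x : Fin 8) : ℕ :=
  #{k | e k = true ∧ (x = (fragmentEdge k).1 ∨ x = (fragmentEdge k).2)}

theorem fragment_adj_fragmentEdge (k : Fin 10) :
    fragment.Adj (fragmentEdge k).1 (fragmentEdge k).2 := by
  revert k; decide

theorem exists_fragmentEdge_eq {x y : Fin 8} (h : fragment.Adj x y) :
    ∃ k, s((fragmentEdge k).1, (fragmentEdge k).2) = s(x, y) := by
  obtain ⟨-, ⟨k, hk⟩ | ⟨k, hk⟩⟩ := h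
  · exact ⟨k, by rw [hk]⟩
  · exact ⟨k, by rw [hk, Sym2.eq_swap]⟩

theorem fragmentEdge_injective :
    Function.Injective fun k => s((fragmentEdge k).1, (fragmentEdge k).2) := by
  decide

theorem eq_of_innerCut_lt_two : ∀ c, innerCut c < 2 → ∀ x y, c x = c y := by
  decide +kernel

-- The colouring `y` marks the vertices of a cycle on one side of the cut, and all links of the
-- fragment on that side are counted as cut.
theorem four_le_innerCut_add_card_linkEdge : ∀ y : Fin 8 → Bool, (∃ x, y x = true) →
    (∀ x, y x = true → 2 ≤ #{z | fragment.Adj x z ∧ y z = true}) →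
    ∀ c : Fin 8 → Bool, (∀ x, y x = true → c x = true) →
      4 ≤ innerCut c + #{k | c (linkEdge k).1 = true} + #{k | c (linkEdge k).2 = true} := by
  decide +kernel

-- This is where the Petersen graph being non-Hamiltonian enters: the selected edges form paths
-- with ends in `{0, 1, 2, 3}` and perhaps cycles. Paths from `{0, 1}` to `{2, 3}` covering the
-- fragment would close up through the removed vertices to a Hamiltonian cycle.
theorem exists_coloring_of_selectedDegree : ∀ e : Fin 10 → Bool,
    (∀ x, selectedDegree e x = 2 ∨ x < 4 ∧ selectedDegree e x = 1) →
    (∃ c : Fin 8 → Bool, (∀ k, e k = true → c (fragmentEdge k).1 = c (fragmentEdge k).2) ∧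
      ∀ x, selectedDegree e x = 1 → c x = decide (2 ≤ x)) ∨
    ∃ c : Fin 8 → Bool, (∀ k, e k = true → c (fragmentEdge k).1 = c (fragmentEdge k).2) ∧
      (∀ x, selectedDegree e x = 1 → c x = false) ∧ (∃ x, c x = true) ∧ ∃ x, c x = false := by
  decide +kernel

open Classical in
theorem ncard_neighborSet_eq_selectedDegree {K : SimpleGraph (Fin 8)} (hK : K ≤ fragment)
    (x : Fin 8) : (K.neighborSet x).ncard =
      selectedDegree (fun k => decide (K.Adj (fragmentEdge k).1 (fragmentEdge k).2)) x := by
  rw [selectedDegree, ← Set.ncard_coe_finset,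
    ← Set.ncard_image_of_injective _ fragmentEdge_injective,
    ← Nat.card_coe_set_eq, ← Nat.card_congr (K.incidenceSetEquivNeighborSet x), Nat.card_coe_set_eq]
  congr 1
  ext e
  constructor
  · induction e with | _ y z =>
    rintro ⟨hyz, hx⟩
    obtain ⟨k, hk⟩ := exists_fragmentEdge_eq (hK hyz)
    rw [← hk] at hyz hx ⊢
    exact ⟨k, by simpa using ⟨hyz, by simpa using hx⟩, rfl⟩
  · rintro ⟨k, hk, rfl⟩
    simp only [decide_eq_true_eq, Finset.coe_filter, Finset.mem_univ, true_and] at hk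
    exact ⟨hk.1, by simpa using hk.2⟩

theorem exists_adj_closed_of_le_fragment {K : SimpleGraph (Fin 8)} (hK : K ≤ fragment)
    (hdeg : ∀ x, (K.neighborSet x).ncard = 2 ∨ x < 4 ∧ (K.neighborSet x).ncard = 1) :
    (∃ R : Set (Fin 8), (∀ x y, K.Adj x y → x ∈ R → y ∈ R) ∧
      ∀ x, (K.neighborSet x).ncard = 1 → (x ∈ R ↔ 2 ≤ x)) ∨
    ∃ R : Set (Fin 8), (∀ x y, K.Adj x y → x ∈ R → y ∈ R) ∧
      (∀ x, (K.neighborSet x).ncard = 1 → x ∉ R) ∧ R.Nonempty ∧ Rᶜ.Nonempty := by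
  classical
  simp only [ncard_neighborSet_eq_selectedDegree hK] at hdeg ⊢
  have closed {c : Fin 8 → Bool}
      (hc : ∀ k, decide (K.Adj (fragmentEdge k).1 (fragmentEdge k).2) = true →
        c (fragmentEdge k).1 = c (fragmentEdge k).2) (x y : Fin 8) (hxy : K.Adj x y)
      (hx : x ∈ {x | c x = true}) : y ∈ {x | c x = true} := by
    obtain ⟨-, ⟨k, hk⟩ | ⟨k, hk⟩⟩ := hK hxy <;> specialize hc k <;> rw [hk] at hc
    · exact (hc (decide_eq_true hxy)).symm.trans hx
    · exact (hc (decide_eq_true hxy.symm)).trans hx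
  obtain ⟨c, hc, hport⟩ | ⟨c, hc, hport, hne⟩ := exists_coloring_of_selectedDegree _ hdeg
  · exact .inl ⟨{x | c x = true}, closed hc, fun x hx => by simp [hport x hx]⟩
  · exact .inr ⟨{x | c x = true}, closed hc, by simpa using hport,
      by simpa [Set.Nonempty] using hne⟩

/-- The circular chain of `m` copies of `fragment`. -/
abbrev petersenChain (m : ℕ) : SimpleGraph (ZMod m × Fin 8) := circularChain m fragment Link

theorem card_fragment_neighbors_or_link (x : Fin 8) :
    #{y | fragment.Adj x y ∨ Link x y ∨ Link y x} = 3 := by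
  revert x; decide

theorem isCubic_petersenChain (m : ℕ) [Nontrivial (ZMod m)] : IsCubic (petersenChain m) := by
  rintro ⟨i, x⟩
  have snd_injOn : Set.InjOn Prod.snd ((petersenChain m).neighborSet (i, x)) := by
    have disjoint_cases : ∀ x y : Fin 8, ¬(fragment.Adj x y ∧ Link x y) ∧
        ¬(fragment.Adj x y ∧ Link y x) ∧ ¬(Link x y ∧ Link y x) := by decide
    rintro ⟨j, y⟩ hj ⟨k, z⟩ hk rfl
    have := disjoint_cases x y
    have := circularChain_adj_cases hj
    have := circularChain_adj_cases hk
    grind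
  have snd_image : Prod.snd '' (petersenChain m).neighborSet (i, x) =
      ({y | fragment.Adj x y ∨ Link x y ∨ Link y x} : Finset (Fin 8)) := by
    ext y
    simp only [Set.mem_image, mem_neighborSet, Prod.exists, exists_eq_right, Finset.coe_filter,
      Finset.mem_univ, true_and, Set.mem_ofPred_eq]
    constructor
    · rintro ⟨j, hj⟩
      have := circularChain_adj_cases hj
      grind
    · rintro (h | h | h)
      · exact ⟨i, circularChain_adj_inner i h⟩
      · exact ⟨i + 1, circularChain_adj_link i h⟩
      · have := circularChain_adj_link (F := fragment) (i - 1) h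
        rw [sub_add_cancel] at this
        exact ⟨i - 1, this.symm⟩
  rw [← snd_injOn.ncard_image, snd_image, Set.ncard_coe_finset, card_fragment_neighbors_or_link]

/-- A path through the fragments `0, …, k` of a chain from `(k, 2)` to `(k, 3)`: it enters
fragment `0` by both links and covers it, and runs through each later fragment twice, missing only
the vertex `4`. -/
def spine (m : ℕ) : ℕ → List (ZMod m × Fin 8)
  | 0 => [2, 4, 0, 7, 5, 1, 6, 3].map (Prod.mk 0)
  | k + 1 => [2, 5, 7, 0].map (Prod.mk ↑(k + 1)) ++ spine m k ++ [1, 6, 3].map (Prod.mk ↑(k + 1))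

section Spine

variable {m : ℕ}

theorem head?_spine (k : ℕ) : (spine m k).head? = some (↑k, 2) := by
  cases k <;> simp [spine]

theorem getLast?_spine (k : ℕ) : (spine m k).getLast? = some (↑k, 3) := by
  cases k with
  | zero => simp [spine]
  | succ k =>
    rw [spine, List.getLast?_append]
    simp

theorem length_spine (k : ℕ) : (spine m k).length = 7 * k + 8 := by
  induction k with
  | zero => simp [spine]
  | succ k ih =>
    simp only [spine, List.length_append, List.length_map, ih, List.length_cons, List.length_nil]
    ring

theorem isChain_map_mk {l : List (Fin 8)} (hl : l.IsChain fragment.Adj) (i : ZMod m) :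
    (l.map (Prod.mk i)).IsChain (petersenChain m).Adj :=
  (List.isChain_map _).2 (hl.imp fun _ _ => circularChain_adj_inner i)

theorem val_le_of_mem_spine {k : ℕ} (hk : k < m) {v : ZMod m × Fin 8} (hv : v ∈ spine m k) :
    v.1.val ≤ k := by
  induction k with
  | zero =>
    obtain ⟨x, -, rfl⟩ := List.mem_map.1 hv
    simp
  | succ k ih =>
    have hval : ((k + 1 : ℕ) : ZMod m).val = k + 1 := ZMod.val_natCast_of_lt hk
    simp only [spine, List.mem_append, List.mem_map] at hv
    obtain (⟨x, -, rfl⟩ | hv) | ⟨x, -, rfl⟩ := hv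
    exacts [hval.le, (ih (by lia) hv).trans k.le_succ, hval.le]

theorem natCast_succ_mk_notMem_spine {k : ℕ} (hk : k + 1 < m) (x : Fin 8) :
    (((k + 1 : ℕ) : ZMod m), x) ∉ spine m k := fun h => by
  have := val_le_of_mem_spine (by lia) h
  rw [ZMod.val_natCast_of_lt hk] at this
  lia

theorem nodup_spine {k : ℕ} (hk : k < m) : (spine m k).Nodup := by
  have nodup_map {l : List (Fin 8)} (hl : l.Nodup) (i : ZMod m) : (l.map (Prod.mk i)).Nodup :=
    hl.map (Prod.mk_right_injective i)
  induction k with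
  | zero => exact nodup_map (by decide) 0
  | succ k ih =>
    have hnot := natCast_succ_mk_notMem_spine hk
    simp only [spine, List.nodup_append, List.mem_append, List.mem_map]
    refine ⟨⟨nodup_map (by decide) _, ih (by lia), ?_⟩, nodup_map (by decide) _, ?_⟩
    · rintro _ ⟨x, -, rfl⟩ _ hv rfl
      exact hnot x hv
    · rintro _ (⟨x, hx, rfl⟩ | hv) _ ⟨y, hy, rfl⟩ h
      · simp only [Prod.mk.injEq, true_and] at h
        subst h
        revert x
        decide
      · exact hnot y (h ▸ hv)

variable [Fact (1 < m)]

theorem isChain_spine (k : ℕ) : (spine m k).IsChain (petersenChain m).Adj := by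
  induction k with
  | zero => exact isChain_map_mk (by decide) 0
  | succ k ih =>
    refine .append (.append (isChain_map_mk (by decide) _) ih ?_)
      (isChain_map_mk (by decide) _) ?_
    · rw [head?_spine]
      have := (circularChain_adj_link (F := fragment) (k : ZMod m) (show Link 2 0 by decide)).symm
      simpa using this
    · rw [List.getLast?_append, getLast?_spine]
      have := circularChain_adj_link (F := fragment) (k : ZMod m) (show Link 3 1 by decide)
      simpa using this

theorem exists_isCycle_length_petersenChain :
    ∃ (u : ZMod m × Fin 8) (w : (petersenChain m).Walk u u), w.IsCycle ∧ w.length = 7 * m + 2 := by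
  obtain ⟨k, rfl⟩ := Nat.exists_eq_add_of_le' (show 2 ≤ m from (Fact.out : 1 < m))
  let i : ZMod (k + 2) := ↑(k + 1)
  let last : List (Fin 8) := [1, 5, 2, 4, 6, 3, 7, 0]
  let l := spine (k + 2) k ++ last.map (Prod.mk i)
  have hlen : l.length = 7 * (k + 2) + 2 := by simp [l, last, length_spine]; ring
  have hne : l ≠ [] := by simp [l, last]
  have hi : (k : ZMod (k + 2)) + 1 = i := by simp [i]
  have hchain : l.IsChain (petersenChain (k + 2)).Adj := by
    refine .append (isChain_spine k) (isChain_map_mk (by decide) i) ?_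
    rw [getLast?_spine]
    have := circularChain_adj_link (F := fragment) (k : ZMod (k + 2)) (show Link 3 1 by decide)
    simpa [last, hi] using this
  have hnodup : l.Nodup := by
    refine List.nodup_append.2 ⟨nodup_spine (by lia),
      .map (Prod.mk_right_injective i) (by decide), ?_⟩
    rintro _ hv _ hw rfl
    obtain ⟨x, -, rfl⟩ := List.mem_map.1 hw
    exact natCast_succ_mk_notMem_spine (by lia) x hv
  have hhead : l.head hne = (↑k, 2) := by
    simp [List.head_eq_iff_head?_eq_some, l, head?_spine]
  have hlast : l.getLast hne = (i, 0) := by simp [l, last]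
  have hclose : (petersenChain (k + 2)).Adj (l.getLast hne) (l.head hne) := by
    rw [hhead, hlast, ← hi]
    exact (circularChain_adj_link _ (by decide)).symm
  exact hlen ▸ exists_isCycle_of_isChain hne hchain hnodup (by lia) hclose

end Spine

section UpperBound

variable {m : ℕ} {H : (petersenChain m).Subgraph}

/-- The edges of `H` inside the `i`-th fragment. -/
def blockTrace (H : (petersenChain m).Subgraph) (i : ZMod m) : SimpleGraph (Fin 8) :=
  H.spanningCoe.comap (Prod.mk i)

theorem blockTrace_adj {i : ZMod m} {x y : Fin 8} :
    (blockTrace H i).Adj x y ↔ H.Adj (i, x) (i, y) := Iff.rfl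

theorem subsingleton_exits (i : ZMod m) (x : Fin 8) :
    {v ∈ (petersenChain m).neighborSet (i, x) | v.1 ≠ i}.Subsingleton := by
  have link_unique : ∀ x y z : Fin 8, (Link x y → Link x z → y = z) ∧
      (Link y x → Link z x → y = z) ∧ ¬(Link x y ∧ Link z x) := by decide
  rintro ⟨j, y⟩ ⟨hj, hji⟩ ⟨k, z⟩ ⟨hk, hki⟩
  have := link_unique x y z
  have := link_unique x z y
  have := circularChain_adj_cases hj
  have := circularChain_adj_cases hk
  grind

theorem lt_four_of_adj_of_ne {i : ZMod m} {x : Fin 8} {v : ZMod m × Fin 8}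
    (h : (petersenChain m).Adj (i, x) v) (hv : v.1 ≠ i) : x < 4 := by
  have link_lt_four : ∀ x y, Link x y → x < 4 ∧ y < 4 := by decide
  have := circularChain_adj_cases h
  grind

variable [Fact (1 < m)]

theorem blockTrace_le (i : ZMod m) : blockTrace H i ≤ fragment :=
  fun _ _ h => circularChain_adj_same.1 (blockTrace_adj.1 h).adj_sub

theorem ncard_neighborSet_blockTrace (i : ZMod m) (x : Fin 8) :
    ((blockTrace H i).neighborSet x).ncard + {v ∈ H.neighborSet (i, x) | v.1 ≠ i}.ncard =
      (H.neighborSet (i, x)).ncard := by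
  have hinner : Prod.mk i '' (blockTrace H i).neighborSet x =
      H.neighborSet (i, x) ∩ {v | v.1 = i} := by
    ext ⟨j, y⟩
    simp only [Set.mem_image, mem_neighborSet, blockTrace_adj, Prod.mk.injEq, Set.mem_inter_iff,
      Subgraph.mem_neighborSet, Set.mem_ofPred_eq]
    grind
  rw [← Set.ncard_image_of_injective _ (Prod.mk_right_injective i), hinner,
    ← Set.ncard_inter_add_ncard_sdiff_eq_ncard (H.neighborSet (i, x)) {v | v.1 = i}]
  rfl

theorem ncard_neighborSet_blockTrace_eq_one {i : ZMod m} {x : Fin 8} {v : ZMod m × Fin 8}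
    (hdeg : (H.neighborSet (i, x)).ncard = 2) (h : H.Adj (i, x) v) (hv : v.1 ≠ i) :
    ((blockTrace H i).neighborSet x).ncard = 1 := by
  have hexits : {v ∈ H.neighborSet (i, x) | v.1 ≠ i} = {v} :=
    Set.Subsingleton.eq_singleton_of_mem
      ((subsingleton_exits i x).anti fun u hu => ⟨hu.1.adj_sub, hu.2⟩) ⟨h, hv⟩
  have := ncard_neighborSet_blockTrace (H := H) i x
  rw [hexits, Set.ncard_singleton] at this
  lia

theorem ncard_neighborSet_blockTrace_eq_two_or {i : ZMod m} {x : Fin 8}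
    (hdeg : (H.neighborSet (i, x)).ncard = 2) :
    ((blockTrace H i).neighborSet x).ncard = 2 ∨
      x < 4 ∧ ((blockTrace H i).neighborSet x).ncard = 1 := by
  by_cases hv : ∃ v, H.Adj (i, x) v ∧ v.1 ≠ i
  · obtain ⟨v, h, hv⟩ := hv
    exact .inr ⟨lt_four_of_adj_of_ne h.adj_sub hv, ncard_neighborSet_blockTrace_eq_one hdeg h hv⟩
  · have hexits : {v ∈ H.neighborSet (i, x) | v.1 ≠ i} = ∅ :=
      Set.eq_empty_of_forall_notMem fun v h => hv ⟨v, h⟩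
    have := ncard_neighborSet_blockTrace (H := H) i x
    rw [hexits, Set.ncard_empty] at this
    exact .inl (by lia)

theorem exists_splitsAt (hH : H.Connected) (hdeg : ∀ v ∈ H.verts, (H.neighborSet v).ncard = 2)
    {i : ZMod m} (hi : ∀ x, (i, x) ∈ H.verts) : ∃ R, SplitsAt H i R := by
  have exit {x v} (h : H.Adj (i, x) v) (hv : v.1 ≠ i) :=
    ncard_neighborSet_blockTrace_eq_one (hdeg _ (hi x)) h hv
  have link_ports : ∀ x y, Link x y → 2 ≤ x ∧ ¬2 ≤ y := by decide
  obtain ⟨R, hR, hport⟩ | ⟨R, hR, hport, ⟨x, hx⟩, y, hy⟩ :=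
    exists_adj_closed_of_le_fragment (blockTrace_le i)
      fun x => ncard_neighborSet_blockTrace_eq_two_or (hdeg _ (hi x))
  · refine ⟨R, hR, fun x y hL h => ?_, fun j x y hL hj h => ?_⟩
    · exact (hport x (exit h (by simp))).2 (link_ports x y hL).1
    · rw [hport y (exit h.symm (by simp [← hj]))]
      exact (link_ports x y hL).2
  · refine absurd (mem_of_connected_circularChain hH (A := {v | v.1 = i ∧ v.2 ∈ R}) ?_ ?_
      (hi x) (hi y) ⟨rfl, hx⟩).2 hy
    · rintro j x y h ⟨rfl, hx⟩
      exact ⟨rfl, hR x y h hx⟩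
    · intro j x y _ h
      constructor
      · rintro ⟨rfl, hx⟩
        exact absurd hx (hport x (exit h (by simp)))
      · rintro ⟨rfl, hy⟩
        exact absurd hy (hport y (exit h.symm (by simp)))

theorem length_le_of_isCycle {u : ZMod m × Fin 8} {w : (petersenChain m).Walk u u}
    (hw : w.IsCycle) : w.length ≤ 7 * m + 2 := by
  classical
  let P : Finset (ZMod m × Fin 8) := w.support.tail.toFinset
  have hP : ∀ v, v ∈ P ↔ v ∈ w.toSubgraph.verts := fun v => by
    rw [List.mem_toFinset, mem_tail_support_iff_of_isCycle hw, Walk.mem_verts_toSubgraph]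
  have hPcard : #P = w.length := by
    simp [P, List.toFinset_card_of_nodup hw.support_nodup]
  have hfull : #(Pᶜ.image Prod.fst)ᶜ ≤ 2 := by
    refine card_splitsAt_le_two w.toSubgraph_connected fun i hi => ?_
    have hiP : ∀ x, (i, x) ∈ P := by simpa using hi
    have hcov : ∀ x, (i, x) ∈ w.toSubgraph.verts := fun x => (hP _).1 (hiP x)
    exact ⟨⟨0, hcov 0⟩, exists_splitsAt w.toSubgraph_connected
      (fun v hv => hw.ncard_neighborSet_toSubgraph_eq_two (by simpa using hv)) hcov⟩
  have hmissed : #(Pᶜ.image Prod.fst) ≤ #Pᶜ := Finset.card_image_le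
  have hblocks := Finset.card_add_card_compl (Pᶜ.image Prod.fst)
  have hvertices := Finset.card_add_card_compl P
  simp only [Fintype.card_prod, ZMod.card, Fintype.card_fin] at hblocks hvertices
  lia

theorem circumference_petersenChain : circumference (petersenChain m) = 7 * m + 2 := by
  refine IsGreatest.csSup_eq ⟨exists_isCycle_length_petersenChain, ?_⟩
  rintro _ ⟨u, w, hw, rfl⟩
  exact length_le_of_isCycle hw

end UpperBound

section EdgeCut

variable {m : ℕ}

open Classical in
/-- The indicator function of `S` on the `i`-th fragment. -/
noncomputable def blockColor (S : Set (ZMod m × Fin 8)) (i : ZMod m) (x : Fin 8) : Bool :=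
  decide ((i, x) ∈ S)

/-- The number of edges of `edgeCut (petersenChain m) S` which lie inside the `i`-th fragment or
join it to the next one. -/
noncomputable def blockCut (S : Set (ZMod m × Fin 8)) (i : ZMod m) : ℕ :=
  innerCut (blockColor S i) +
    #{k | blockColor S i (linkEdge k).1 ≠ blockColor S (i + 1) (linkEdge k).2}

/-- The edges of `petersenChain m`, each of them attributed to the fragment containing it or, for a
link, to the earlier one of the two fragments it joins. -/
def chainEdge : ZMod m × (Fin 10 ⊕ Fin 2) → (ZMod m × Fin 8) × (ZMod m × Fin 8)
  | (i, .inl k) => ((i, (fragmentEdge k).1), (i, (fragmentEdge k).2))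
  | (i, .inr k) => ((i, (linkEdge k).1), (i + 1, (linkEdge k).2))

variable {S : Set (ZMod m × Fin 8)} {i : ZMod m}

theorem blockColor_eq_false (hS : S ⊆ {v | v.1 = i}) {j : ZMod m} (hj : j ≠ i) (x : Fin 8) :
    blockColor S j x = false := by
  classical exact decide_eq_false fun h => hj (hS h)

variable [Fact (1 < m)]

theorem petersenChain_adj_chainEdge :
    ∀ a, (petersenChain m).Adj (chainEdge a).1 (chainEdge a).2
  | (i, .inl k) => circularChain_adj_inner i (fragment_adj_fragmentEdge k)
  | (i, .inr k) => circularChain_adj_link i ⟨k, rfl⟩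

theorem chainEdge_injective :
    Function.Injective fun a : ZMod m × (Fin 10 ⊕ Fin 2) =>
      s((chainEdge a).1, (chainEdge a).2) := by
  have link_injective : ∀ k l, (linkEdge k).1 = (linkEdge l).1 → k = l := by decide
  have link_ne : ∀ k l, (linkEdge k).1 ≠ (linkEdge l).2 := by decide
  have add_one_ne : ∀ j : ZMod m, j + 1 ≠ j := by simp
  rintro ⟨i, k | k⟩ ⟨j, l | l⟩ h <;>
    simp only [chainEdge, Sym2.eq_iff, Prod.mk.injEq] at h
  · have hij : i = j := h.elim (·.1.1) (·.1.1)
    have hkl : k = l := fragmentEdge_injective (Sym2.eq_iff.2 (by tauto))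
    rw [hij, hkl]
  · grind
  · grind
  · grind

theorem sum_blockCut_le_ncard_edgeCut (S : Set (ZMod m × Fin 8)) :
    ∑ i, blockCut S i ≤ (edgeCut (petersenChain m) S).ncard := by
  classical
  refine le_trans (le_of_eq ?_)
    (card_filter_le_ncard_edgeCut petersenChain_adj_chainEdge chainEdge_injective S)
  rw [Finset.card_filter, Fintype.sum_prod_type]
  simp only [Fintype.sum_sum_type, Finset.card_filter, blockCut, innerCut, chainEdge, blockColor,
    ne_eq, decide_eq_decide]
  congr!

theorem four_le_ncard_edgeCut_of_subset (hS : S ⊆ {v | v.1 = i})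
    (hcycle : HasCycle ((petersenChain m).induce S)) :
    4 ≤ (edgeCut (petersenChain m) S).ncard := by
  classical
  obtain ⟨Y, hYS, ⟨⟨j, x⟩, hx⟩, hY⟩ := exists_subset_two_neighbors_of_hasCycle hcycle
  obtain rfl : j = i := hS (hYS hx)
  have hdeg (x : Fin 8) (hx : blockColor Y j x = true) :
      2 ≤ #{z | fragment.Adj x z ∧ blockColor Y j z = true} := by
    obtain ⟨N, hNY, hNG, hN⟩ := hY _ (of_decide_eq_true hx)
    rw [← Set.ncard_coe_finset, ← Set.ncard_image_of_injective _ (Prod.mk_right_injective j), ← hN]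
    refine Set.ncard_le_ncard ?_ (Set.toFinite _)
    rintro ⟨k, z⟩ hz
    obtain rfl : k = j := hS (hYS (hNY hz))
    exact ⟨z, by simpa [blockColor] using ⟨circularChain_adj_same.1 (hNG hz), hNY hz⟩, rfl⟩
  have hcut := four_le_innerCut_add_card_linkEdge (blockColor Y j) ⟨x, decide_eq_true hx⟩ hdeg
    (blockColor S j) fun z hz => decide_eq_true (hYS (of_decide_eq_true hz))
  have hnext : blockCut S j =
      innerCut (blockColor S j) + #{k | blockColor S j (linkEdge k).1 = true} := by
    simp [blockCut, blockColor_eq_false hS (j := j + 1) (by simp)]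
  have hprev : #{k | blockColor S j (linkEdge k).2 = true} ≤ blockCut S (j - 1) := by
    simp [blockCut, blockColor_eq_false hS (j := j - 1) (by simp)]
  have hpair : blockCut S (j - 1) + blockCut S j ≤ ∑ i, blockCut S i := by
    rw [← Finset.sum_pair (by simp)]
    exact Finset.sum_le_univ_sum_of_nonneg fun _ => Nat.zero_le _
  have := sum_blockCut_le_ncard_edgeCut S
  lia

theorem exists_forall_blockCut_lt_two (h : (edgeCut (petersenChain m) S).ncard < 4) :
    ∃ i, ∀ j ≠ i, blockCut S j < 2 := by
  by_contra! hcut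
  obtain ⟨i, -, hi⟩ := hcut 0
  obtain ⟨j, hji, hj⟩ := hcut i
  have hpair : blockCut S j + blockCut S i ≤ ∑ i, blockCut S i := by
    rw [← Finset.sum_pair hji]
    exact Finset.sum_le_univ_sum_of_nonneg fun _ => Nat.zero_le _
  have := sum_blockCut_le_ncard_edgeCut S
  lia

theorem subset_or_compl_subset_of_blockCut_lt_two (h : ∀ j ≠ i, blockCut S j < 2) :
    S ⊆ {v | v.1 = i} ∨ Sᶜ ⊆ {v | v.1 = i} := by
  have hconst {j : ZMod m} (hj : j ≠ i) (x : Fin 8) : blockColor S j x = blockColor S j 0 :=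
    eq_of_innerCut_lt_two _ ((Nat.le_add_right _ _).trans_lt (h j hj)) x 0
  have hstep (j : ZMod m) (hj : j ≠ i) (hj' : j + 1 ≠ i) :
      blockColor S (j + 1) 0 = blockColor S j 0 := by
    by_contra hne
    have := h j hj
    simp [blockCut, hconst hj, hconst hj', Ne.symm hne] at this
  have hcolor {j : ZMod m} (hj : j ≠ i) (x : Fin 8) :
      blockColor S j x = blockColor S (i + 1) 0 :=
    (hconst hj x).trans (eq_of_forall_apply_add_one_eq (g := (blockColor S · 0)) hstep hj)
  by_cases hfar : (i + 1, 0) ∈ S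
  · refine .inr fun ⟨j, x⟩ hx => by_contra fun hj => hx ?_
    exact (decide_eq_decide.1 (hcolor hj x)).2 hfar
  · refine .inl fun ⟨j, x⟩ hx => by_contra fun hj => hfar ?_
    exact (decide_eq_decide.1 (hcolor hj x)).1 hx

theorem cyclicallyEdgeConnected_petersenChain : CyclicallyEdgeConnected (petersenChain m) 4 := by
  intro S hS hSc
  change 4 ≤ (edgeCut (petersenChain m) S).ncard
  by_contra! hlt
  obtain ⟨i, hi⟩ := exists_forall_blockCut_lt_two hlt
  obtain hsub | hsub := subset_or_compl_subset_of_blockCut_lt_two hi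
  · exact hlt.not_ge (four_le_ncard_edgeCut_of_subset hsub hS)
  · exact hlt.not_ge (edgeCut_compl (G := petersenChain m) S ▸
      four_le_ncard_edgeCut_of_subset hsub hSc)

end EdgeCut

/-- For each m ≥ 2 there is a cyclically 4-edge-connected cubic graph of order 8m
with circumference exactly 7m + 2. -/
theorem stmt_8 (m : ℕ) (hm : 2 ≤ m) :
    ∃ (V : Type) (_ : Fintype V) (G : SimpleGraph V),
      IsCubic G ∧ CyclicallyEdgeConnected G 4 ∧
      Fintype.card V = 8 * m ∧ circumference G = 7 * m + 2 := by
  have : Fact (1 < m) := ⟨hm⟩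
  exact ⟨ZMod m × Fin 8, inferInstance, petersenChain m, isCubic_petersenChain m,
    cyclicallyEdgeConnected_petersenChain, by simp [mul_comm], circumference_petersenChain⟩
end

section
/- Let G be a bridgeless cubic graph containing m pairwise vertex-disjoint subgraphs H_1, ..., H_m, each of resistance at least k, such that no cycle of G is contained in more than one H_i, and suppose m ≥ 2. Then every cycle of G either is contained in a single H_i or misses at least k vertices of each H_i; consequently, the circumference of G is at most |V(G)| − k(m−1). -/
open SimpleGraph

def EdgesShare {V : Type*} (e₁ e₂ : Sym2 V) : Prop := ∃ v, v ∈ e₁ ∧ v ∈ e₂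

def IsProper3EdgeColoring {V : Type*} (G : SimpleGraph V) (c : Sym2 V → Fin 3) : Prop :=
  ∀ e₁ ∈ G.edgeSet, ∀ e₂ ∈ G.edgeSet, e₁ ≠ e₂ → EdgesShare e₁ e₂ → c e₁ ≠ c e₂

def Is3EdgeColorable {V : Type*} (G : SimpleGraph V) : Prop :=
  ∃ c, IsProper3EdgeColoring G c

noncomputable def resistance {V : Type*} (G : SimpleGraph V) : ℕ :=
  sInf {n | ∃ F : Finset (Sym2 V), ↑F ⊆ G.edgeSet ∧ F.card = n ∧
    Is3EdgeColorable (G.deleteEdges ↑F)}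

/-- A cycle (walk) of G is contained in the subgraph H. -/
def CycleInSubgraph {V : Type*} {G : SimpleGraph V} (H : G.Subgraph)
    {u : V} (w : G.Walk u u) : Prop :=
  (∀ e ∈ w.edges, e ∈ H.edgeSet) ∧ ∀ v ∈ w.support, v ∈ H.verts

/-!
Fix a cycle `C` that uses an edge outside `H`, and delete from `H` the vertices that `C` misses.
The remaining edges of `H` lie on `C` minus an edge, which is a path and is coloured alternately
with two colours, or are chords of `C`, which form a matching because the graph is subcubic and get
the third colour. Putting a deleted vertex `v` back costs at most one edge: this is clear unless
the three neighbours of `v` miss the same colour `a`, and then each of them is an end of its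
`a`/`b` Kempe chain. A chain has at most two ends, so switching the chain of one neighbour leaves
`a` missing at a second one while `b` becomes missing at the first, and only the edge from `v` to
the third has to go. Hence `C` misses at least as many vertices of `H` as the resistance of `H`.
-/

section EdgeColoring

variable {V W : Type*} {G G' : SimpleGraph V} {c : Sym2 V → Fin 3}

theorem isProper3EdgeColoring_iff_injOn :
    IsProper3EdgeColoring G c ↔ ∀ v, Set.InjOn (fun w ↦ c s(v, w)) (G.neighborSet v) := by
  refine ⟨fun h v a ha b hb hab ↦ ?_, fun h ↦ ?_⟩
  · by_contra hne
    exact h s(v, a) ha s(v, b) hb (fun he ↦ hne (Sym2.congr_right.1 he))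
      ⟨v, Sym2.mem_mk_left v a, Sym2.mem_mk_left v b⟩ hab
  · rintro _ h₁ _ h₂ hne ⟨v, ⟨a, rfl⟩, ⟨b, rfl⟩⟩ hab
    exact hne (congrArg _ (h v h₁ h₂ hab))

theorem IsProper3EdgeColoring.mono (hc : IsProper3EdgeColoring G' c) (h : G ≤ G') :
    IsProper3EdgeColoring G c :=
  fun e₁ h₁ e₂ h₂ ↦ hc e₁ (edgeSet_mono h h₁) e₂ (edgeSet_mono h h₂)

theorem Is3EdgeColorable.of_injective_hom {G' : SimpleGraph W} (h : Is3EdgeColorable G')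
    (f : G →g G') (hf : Function.Injective f) : Is3EdgeColorable G := by
  obtain ⟨c, hc⟩ := h
  rw [isProper3EdgeColoring_iff_injOn] at hc
  exact ⟨c ∘ Sym2.map f, isProper3EdgeColoring_iff_injOn.2 fun v a ha b hb hab ↦
    hf (hc (f v) (f.map_adj ha) (f.map_adj hb) hab)⟩

theorem Is3EdgeColorable.mono (h : Is3EdgeColorable G') (hle : G ≤ G') : Is3EdgeColorable G :=
  h.of_injective_hom (Hom.ofLE hle) Function.injective_id

theorem resistance_le_card {F : Finset (Sym2 V)} (h : Is3EdgeColorable (G.deleteEdges F)) :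
    resistance G ≤ F.card := by
  classical
  rw [deleteEdges_eq_inter_edgeSet] at h
  calc resistance G
      ≤ (F.filter (· ∈ G.edgeSet)).card :=
        Nat.sInf_le ⟨_, fun _ he ↦ (Finset.mem_filter.1 he).2, rfl,
          h.mono (deleteEdges_anti fun _ he ↦ Finset.mem_filter.2 he)⟩
    _ ≤ F.card := Finset.card_filter_le _ _

theorem is3EdgeColorable_of_subsingleton_neighborSet_sdiff {K : SimpleGraph V}
    (hc : IsProper3EdgeColoring K c) (hc2 : ∀ e, c e ≠ 2)
    (h : ∀ v, ((G \ K).neighborSet v).Subsingleton) : Is3EdgeColorable G := by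
  classical
  rw [isProper3EdgeColoring_iff_injOn] at hc
  refine ⟨fun e ↦ if e ∈ K.edgeSet then c e else 2, isProper3EdgeColoring_iff_injOn.2 ?_⟩
  intro v a ha b hb hab
  by_cases hKa : K.Adj v a <;> by_cases hKb : K.Adj v b <;>
    simp only [mem_edgeSet, hKa, hKb, if_true, if_false] at hab
  · exact hc v hKa hKb hab
  · exact absurd hab (hc2 _)
  · exact absurd hab.symm (hc2 _)
  · exact h v ⟨ha, hKa⟩ ⟨hb, hKb⟩

end EdgeColoring

section Kempe

variable {V : Type*} {G G' : SimpleGraph V} {c : Sym2 V → Fin 3} {a b t : Fin 3} {v w x y z : V}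

/-- The colour `t` is missing at `v`: no edge of `G` at `v` has colour `t`. Properness of the
colouring `c` is not part of the notion. -/
def IsMissingAt (G : SimpleGraph V) (c : Sym2 V → Fin 3) (t : Fin 3) (v : V) : Prop :=
  ∀ w, G.Adj v w → c s(v, w) ≠ t

theorem IsMissingAt.mono (ht : IsMissingAt G' c t v) (h : G ≤ G') : IsMissingAt G c t v :=
  fun w hw ↦ ht w (h hw)

theorem exists_isMissingAt (c : Sym2 V → Fin 3) (hv : (G.neighborSet v).encard < 3) :
    ∃ t, IsMissingAt G c t v := by
  by_contra! hcon
  have huniv : (fun w ↦ c s(v, w)) '' G.neighborSet v = Set.univ := by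
    refine Set.eq_univ_of_forall fun t ↦ ?_
    simpa [IsMissingAt] using hcon t
  have hle := Set.encard_image_le (fun w ↦ c s(v, w)) (G.neighborSet v)
  rw [huniv, Set.encard_univ, ENat.card_eq_coe_fintype_card, Fintype.card_fin] at hle
  exact hle.not_gt hv

theorem is3EdgeColorable_of_deleteIncidenceSet
    (hc : IsProper3EdgeColoring (G.deleteIncidenceSet v) c) {f : V → Fin 3}
    (hf : Set.InjOn f (G.neighborSet v))
    (hmiss : ∀ w, G.Adj v w → IsMissingAt (G.deleteIncidenceSet v) c (f w) w) :
    Is3EdgeColorable G := by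
  classical
  let c' : Sym2 V → Fin 3 := fun e ↦ if h : v ∈ e then f (Sym2.Mem.other h) else c e
  have hc'v (w : V) : c' s(v, w) = f w := by
    have h : v ∈ s(v, w) := Sym2.mem_mk_left v w
    have hother : Sym2.Mem.other h = w := Sym2.congr_right.1 (Sym2.other_spec h)
    simp only [c', dif_pos h, hother]
  have hc' {u w : V} (hu : u ≠ v) (hw : w ≠ v) : c' s(u, w) = c s(u, w) := by
    simp [c', hu.symm, hw.symm]
  have hne {u w : V} (huv : G.Adj u v) (huw : G.Adj u w) (hw : w ≠ v) :
      c' s(u, v) ≠ c' s(u, w) := by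
    rw [Sym2.eq_swap, hc'v, hc' huv.ne hw]
    exact (hmiss u huv.symm w (deleteIncidenceSet_adj.2 ⟨huw, huv.ne, hw⟩)).symm
  rw [isProper3EdgeColoring_iff_injOn] at hc
  refine ⟨c', isProper3EdgeColoring_iff_injOn.2 fun u s hs t ht hst ↦ ?_⟩
  rcases eq_or_ne u v with rfl | hu
  · exact hf hs ht (by simpa only [hc'v] using hst)
  by_cases hsv : s = v <;> by_cases htv : t = v
  · exact hsv.trans htv.symm
  · subst hsv
    exact absurd hst (hne hs ht htv)
  · subst htv
    exact absurd hst.symm (hne ht hs hsv)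
  · refine hc u (deleteIncidenceSet_adj.2 ⟨hs, hu, hsv⟩)
      (deleteIncidenceSet_adj.2 ⟨ht, hu, htv⟩) ?_
    simpa only [hc' hu hsv, hc' hu htv] using hst

theorem is3EdgeColorable_deleteEdges_of_isMissingAt (hN : G.neighborSet v ⊆ {x, y, z})
    (hc : IsProper3EdgeColoring (G.deleteIncidenceSet v) c)
    (hx : IsMissingAt (G.deleteIncidenceSet v) c a x)
    (hy : IsMissingAt (G.deleteIncidenceSet v) c b y) (hxy : x = y ∨ a ≠ b) :
    Is3EdgeColorable (G.deleteEdges {s(v, z)}) := by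
  classical
  have hle : (G.deleteEdges {s(v, z)}).deleteIncidenceSet v ≤ G.deleteIncidenceSet v := by
    intro u w h
    rw [deleteIncidenceSet_adj] at h ⊢
    exact ⟨deleteEdges_le _ h.1, h.2⟩
  have hN' : ∀ w ∈ (G.deleteEdges {s(v, z)}).neighborSet v, w = x ∨ w = y := by
    intro w hw
    obtain ⟨hw, hwz⟩ := deleteEdges_adj.1 hw
    rcases hN hw with rfl | rfl | rfl
    exacts [.inl rfl, .inr rfl, absurd rfl hwz]
  refine is3EdgeColorable_of_deleteIncidenceSet (f := fun w ↦ if w = x then a else b)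
    (hc.mono hle) ?_ ?_
  · intro s hs t ht hst
    grind
  · intro w hw
    rcases hN' w hw with rfl | rfl
    · simpa using hx.mono hle
    · split_ifs with h
      · exact h ▸ hx.mono hle
      · exact hy.mono hle

/-- The graph of the `a`/`b` Kempe chains of the colouring `c`: it keeps the edges of `G` coloured
`a` or `b`, and the chains are its connected components. -/
def kempeGraph (G : SimpleGraph V) (c : Sym2 V → Fin 3) (a b : Fin 3) : SimpleGraph V :=
  G.deleteEdges {e | c e ≠ a ∧ c e ≠ b}

theorem kempeGraph_adj :
    (kempeGraph G c a b).Adj v w ↔ G.Adj v w ∧ (c s(v, w) = a ∨ c s(v, w) = b) := by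
  simp only [kempeGraph, deleteEdges_adj, Set.mem_ofPred_eq]
  tauto

open Classical in
/-- The Kempe switch: the colours `a` and `b` are exchanged on the `a`/`b` chain through `x`. -/
noncomputable def kempeSwap (G : SimpleGraph V) (c : Sym2 V → Fin 3) (a b : Fin 3) (x : V) :
    Sym2 V → Fin 3 :=
  fun e ↦ if ∃ u ∈ e, (kempeGraph G c a b).Reachable x u then Equiv.swap a b (c e) else c e

open Classical in
theorem kempeSwap_apply (h : G.Adj v w) :
    kempeSwap G c a b x s(v, w) =
      if (kempeGraph G c a b).Reachable x v then Equiv.swap a b (c s(v, w)) else c s(v, w) := by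
  by_cases hcol : c s(v, w) = a ∨ c s(v, w) = b
  · have hvw : (kempeGraph G c a b).Adj v w := kempeGraph_adj.2 ⟨h, hcol⟩
    have hiff : (∃ u ∈ s(v, w), (kempeGraph G c a b).Reachable x u) ↔
        (kempeGraph G c a b).Reachable x v := by
      simp only [Sym2.mem_iff, exists_eq_or_imp, exists_eq_left, or_iff_left_iff_imp]
      exact fun hw ↦ hw.trans hvw.symm.reachable
    simp only [kempeSwap, hiff]
  · rw [not_or] at hcol
    simp only [kempeSwap, Equiv.swap_apply_of_ne_of_ne hcol.1 hcol.2, ite_self]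

theorem IsProper3EdgeColoring.kempeSwap (hc : IsProper3EdgeColoring G c) (a b : Fin 3) (x : V) :
    IsProper3EdgeColoring G (kempeSwap G c a b x) := by
  rw [isProper3EdgeColoring_iff_injOn] at hc ⊢
  intro v s hs t ht hst
  simp only [kempeSwap_apply hs, kempeSwap_apply ht] at hst
  split_ifs at hst
  · exact hc v hs ht ((Equiv.swap a b).injective hst)
  · exact hc v hs ht hst

theorem IsMissingAt.kempeSwap_self (h : IsMissingAt G c a x) :
    IsMissingAt G (kempeSwap G c a b x) b x := by
  intro w hw
  rw [kempeSwap_apply hw, if_pos .rfl, ne_eq, Equiv.swap_apply_eq_iff, Equiv.swap_apply_right]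
  exact h w hw

theorem IsMissingAt.kempeSwap_of_not_reachable (h : IsMissingAt G c t y)
    (hxy : ¬ (kempeGraph G c a b).Reachable x y) : IsMissingAt G (kempeSwap G c a b x) t y := by
  intro w hw
  rw [kempeSwap_apply hw, if_neg hxy]
  exact h w hw

theorem encard_neighborSet_kempeGraph_le_two (hc : IsProper3EdgeColoring G c) (a b : Fin 3)
    (v : V) : ((kempeGraph G c a b).neighborSet v).encard ≤ 2 :=
  calc ((kempeGraph G c a b).neighborSet v).encard
      ≤ ({a, b} : Set (Fin 3)).encard :=
        Set.encard_le_encard_of_injOn (fun _ hw ↦ (kempeGraph_adj.1 hw).2)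
          (isProper3EdgeColoring_iff_injOn.1 (hc.mono (deleteEdges_le _)) v)
    _ ≤ ({b} : Set (Fin 3)).encard + 1 := Set.encard_insert_le {b} a
    _ = 2 := by rw [Set.encard_singleton, one_add_one_eq_two]

theorem IsMissingAt.encard_neighborSet_kempeGraph_le_one (h : IsMissingAt G c a v)
    (hc : IsProper3EdgeColoring G c) (b : Fin 3) :
    ((kempeGraph G c a b).neighborSet v).encard ≤ 1 :=
  calc ((kempeGraph G c a b).neighborSet v).encard
      ≤ ({b} : Set (Fin 3)).encard :=
        Set.encard_le_encard_of_injOn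
          (fun w hw ↦ (kempeGraph_adj.1 hw).2.resolve_left (h w (kempeGraph_adj.1 hw).1))
          (isProper3EdgeColoring_iff_injOn.1 (hc.mono (deleteEdges_le _)) v)
    _ = 1 := Set.encard_singleton b

end Kempe

section VertexDeletion

variable {V : Type*} {G : SimpleGraph V} {c : Sym2 V → Fin 3} {a : Fin 3} {v x y z : V}

theorem neighborSet_toSubgraph_eq_of_isPath (h2 : ∀ v, (G.neighborSet v).encard ≤ 2)
    (hxy : x ≠ y) (hx : (G.neighborSet x).encard ≤ 1) (hy : (G.neighborSet y).encard ≤ 1)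
    {p : G.Walk x y} (hp : p.IsPath) (hv : v ∈ p.support) :
    p.toSubgraph.neighborSet v = G.neighborSet v := by
  have hnil : ¬ p.Nil := Walk.not_nil_of_ne hxy
  suffices (p.toSubgraph.neighborSet v).Finite ∧
      (G.neighborSet v).encard ≤ (p.toSubgraph.neighborSet v).encard from
    this.1.eq_of_subset_of_encard_le (p.toSubgraph.neighborSet_subset v) this.2
  obtain ⟨i, rfl, hi⟩ := Walk.mem_support_iff_exists_getVert.1 hv
  rcases eq_or_ne i 0 with rfl | hi0
  · simpa [hp.neighborSet_toSubgraph_startpoint hnil] using hx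
  rcases hi.eq_or_lt with rfl | hil
  · simpa [hp.neighborSet_toSubgraph_endpoint hnil] using hy
  · have htwo := hp.ncard_neighborSet_toSubgraph_internal_eq_two hi0 hil
    have hfin := Set.finite_of_ncard_ne_zero (htwo.trans_ne two_ne_zero)
    refine ⟨hfin, (h2 _).trans_eq ?_⟩
    rw [← hfin.cast_ncard_eq, htwo, Nat.cast_ofNat]

theorem not_reachable_of_encard_neighborSet_le (h2 : ∀ v, (G.neighborSet v).encard ≤ 2)
    (hxy : x ≠ y) (hxz : x ≠ z) (hyz : y ≠ z) (hx : (G.neighborSet x).encard ≤ 1)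
    (hy : (G.neighborSet y).encard ≤ 1) (hz : (G.neighborSet z).encard ≤ 1)
    (hreach : G.Reachable x y) : ¬ G.Reachable x z := by
  intro hreach'
  obtain ⟨p, hp⟩ := hreach.exists_isPath
  have hnbr {v : V} (hv : v ∈ p.support) : p.toSubgraph.neighborSet v = G.neighborSet v :=
    neighborSet_toSubgraph_eq_of_isPath h2 hxy hx hy hp hv
  have hzp : z ∈ p.support := by
    rw [← p.mem_verts_toSubgraph]
    refine hreach'.mem_subgraphVerts (fun v hv w hvw ↦ ?_) p.start_mem_verts_toSubgraph
    rwa [← Subgraph.mem_neighborSet, hnbr (p.mem_verts_toSubgraph.1 hv)]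
  obtain ⟨i, rfl, hi⟩ := Walk.mem_support_iff_exists_getVert.1 hzp
  have hi0 : i ≠ 0 := by rintro rfl; exact hxz p.getVert_zero.symm
  have hil : i ≠ p.length := by rintro rfl; exact hyz p.getVert_length.symm
  have htwo := hp.ncard_neighborSet_toSubgraph_internal_eq_two hi0 (hi.lt_of_ne hil)
  have hone : (G.neighborSet (p.getVert i)).ncard ≤ 1 := by
    rw [Set.ncard_def]
    exact ENat.toNat_le_of_le_natCast hz
  rw [hnbr hzp] at htwo
  omega

theorem eq_empty_or_eq_triple_of_encard_le_three {α : Type*} {s : Set α} (h : s.encard ≤ 3) :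
    s = ∅ ∨ ∃ x y z, s = {x, y, z} := by
  obtain ⟨n, hn⟩ := ENat.ne_top_iff_exists.1 (h.trans_lt (ENat.natCast_lt_top 3)).ne
  have hn3 : n ≤ 3 := by
    rw [← hn] at h
    exact_mod_cast h
  interval_cases n
  · exact .inl (Set.encard_eq_zero.1 hn.symm)
  · obtain ⟨x, rfl⟩ := Set.encard_eq_one.1 hn.symm
    exact .inr ⟨x, x, x, by simp⟩
  · obtain ⟨x, y, -, rfl⟩ := Set.encard_eq_two.1 hn.symm
    exact .inr ⟨x, y, y, by simp⟩
  · obtain ⟨x, y, z, -, -, -, rfl⟩ := Set.encard_eq_three.1 hn.symm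
    exact .inr ⟨x, y, z, rfl⟩

theorem exists_is3EdgeColorable_deleteEdges_of_common_isMissingAt
    (hN : G.neighborSet v ⊆ {x, y, z}) (hxy : x ≠ y) (hxz : x ≠ z) (hyz : y ≠ z)
    (hc : IsProper3EdgeColoring (G.deleteIncidenceSet v) c)
    (hx : IsMissingAt (G.deleteIncidenceSet v) c a x)
    (hy : IsMissingAt (G.deleteIncidenceSet v) c a y)
    (hz : IsMissingAt (G.deleteIncidenceSet v) c a z) :
    ∃ e, Is3EdgeColorable (G.deleteEdges {e}) := by
  obtain ⟨b, hba⟩ := exists_ne a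
  have hswap := hc.kempeSwap a b x
  by_cases hr : (kempeGraph (G.deleteIncidenceSet v) c a b).Reachable x y
  · have hr' := not_reachable_of_encard_neighborSet_le
      (encard_neighborSet_kempeGraph_le_two hc a b) hxy hxz hyz
      (hx.encard_neighborSet_kempeGraph_le_one hc b) (hy.encard_neighborSet_kempeGraph_le_one hc b)
      (hz.encard_neighborSet_kempeGraph_le_one hc b) hr
    have hN' : G.neighborSet v ⊆ {x, z, y} := by rwa [Set.pair_comm]
    exact ⟨s(v, y), is3EdgeColorable_deleteEdges_of_isMissingAt hN' hswap hx.kempeSwap_self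
      (hz.kempeSwap_of_not_reachable hr') (.inr hba)⟩
  · exact ⟨s(v, z), is3EdgeColorable_deleteEdges_of_isMissingAt hN hswap hx.kempeSwap_self
      (hy.kempeSwap_of_not_reachable hr) (.inr hba)⟩

/-- A subcubic graph: every vertex has at most three neighbours. The extended cardinality excludes
vertices of infinite degree. -/
def IsSubcubic (G : SimpleGraph V) : Prop := ∀ v, (G.neighborSet v).encard ≤ 3

theorem IsSubcubic.of_injective_hom {W : Type*} {G' : SimpleGraph W} (h : IsSubcubic G')
    (f : G →g G') (hf : Function.Injective f) : IsSubcubic G := fun v ↦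
  (Set.encard_le_encard_of_injOn (fun _ hw ↦ f.map_adj hw) hf.injOn).trans (h (f v))

theorem IsSubcubic.mono {G' : SimpleGraph V} (h : IsSubcubic G') (hle : G ≤ G') : IsSubcubic G :=
  h.of_injective_hom (Hom.ofLE hle) Function.injective_id

theorem IsSubcubic.encard_neighborSet_deleteIncidenceSet_lt_three (hG : IsSubcubic G)
    {w : V} (h : G.Adj v w) : ((G.deleteIncidenceSet v).neighborSet w).encard < 3 := by
  have hsub : (G.deleteIncidenceSet v).neighborSet w ⊆ G.neighborSet w \ {v} := fun u hu ↦
    ⟨deleteIncidenceSet_le G v hu, (deleteIncidenceSet_adj.1 hu).2.2⟩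
  have hfin : (G.neighborSet w).Finite := Set.finite_of_encard_le_coe (hG w)
  calc ((G.deleteIncidenceSet v).neighborSet w).encard
      ≤ (G.neighborSet w \ {v}).encard := Set.encard_le_encard hsub
    _ < (G.neighborSet w).encard :=
        hfin.sdiff.encard_lt_encard (Set.sdiff_singleton_ssubset.2 h.symm)
    _ ≤ 3 := hG w

theorem IsSubcubic.exists_is3EdgeColorable_deleteEdges (hG : IsSubcubic G)
    (h : Is3EdgeColorable (G.deleteIncidenceSet v)) :
    ∃ e, Is3EdgeColorable (G.deleteEdges {e}) := by
  rcases eq_empty_or_eq_triple_of_encard_le_three (hG v) with hN | ⟨x, y, z, hN⟩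
  · refine ⟨s(v, v), h.mono fun u w huw ↦ deleteIncidenceSet_adj.2 ⟨huw.1, ?_, ?_⟩⟩
    · rintro rfl
      exact (hN ▸ huw.1 : w ∈ (∅ : Set V))
    · rintro rfl
      exact (hN ▸ huw.1.symm : u ∈ (∅ : Set V))
  obtain ⟨c, hc⟩ := h
  have hmissing (w : V) (hw : w ∈ ({x, y, z} : Set V)) :
      ∃ t, IsMissingAt (G.deleteIncidenceSet v) c t w :=
    exists_isMissingAt c (hG.encard_neighborSet_deleteIncidenceSet_lt_three (hN.symm.subset hw))
  obtain ⟨r, hx⟩ := hmissing x (by simp)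
  obtain ⟨s, hy⟩ := hmissing y (by simp)
  obtain ⟨t, hz⟩ := hmissing z (by simp)
  by_cases hxy : x = y ∨ r ≠ s
  · exact ⟨_, is3EdgeColorable_deleteEdges_of_isMissingAt hN.subset hc hx hy hxy⟩
  by_cases hxz : x = z ∨ r ≠ t
  · have hN' : G.neighborSet v = {x, z, y} := by rw [hN, Set.pair_comm]
    exact ⟨_, is3EdgeColorable_deleteEdges_of_isMissingAt hN'.subset hc hx hz hxz⟩
  by_cases hyz : y = z
  · subst hyz
    have hN' : G.neighborSet v ⊆ {y, y, x} := by rw [hN]; grind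
    exact ⟨_, is3EdgeColorable_deleteEdges_of_isMissingAt hN' hc hy hy (.inl rfl)⟩
  push Not at hxy hxz
  obtain ⟨hxy, rfl⟩ := hxy
  obtain ⟨hxz, rfl⟩ := hxz
  exact exists_is3EdgeColorable_deleteEdges_of_common_isMissingAt hN.subset hxy hxz hyz hc hx hy hz

theorem spanningCoe_induce_adj {s : Set V} {u w : V} :
    (G.induce s).spanningCoe.Adj u w ↔ u ∈ s ∧ w ∈ s ∧ G.Adj u w := by
  simp [and_left_comm, and_comm]

theorem IsSubcubic.exists_finset_is3EdgeColorable_deleteEdges (R : Finset V) :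
    ∀ {G : SimpleGraph V}, IsSubcubic G → Is3EdgeColorable (G.induce (↑R)ᶜ).spanningCoe →
      ∃ F : Finset (Sym2 V), F.card ≤ R.card ∧ Is3EdgeColorable (G.deleteEdges F) := by
  classical
  induction R using Finset.induction_on with
  | empty =>
    exact fun _ h ↦ ⟨∅, le_rfl, h.mono fun _ _ huw ↦
      spanningCoe_induce_adj.2 ⟨by simp, by simp, deleteEdges_le _ huw⟩⟩
  | insert v R hv ih =>
    intro G hG h
    have hinduce : ((G.deleteIncidenceSet v).induce (↑R)ᶜ).spanningCoe ≤
        (G.induce (↑(insert v R))ᶜ).spanningCoe := fun u w ↦ by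
      simp only [spanningCoe_induce_adj, deleteIncidenceSet_adj]
      grind
    obtain ⟨F, hF, hcol⟩ := ih (hG.mono (deleteIncidenceSet_le G v)) (h.mono hinduce)
    have hcomm : (G.deleteEdges F).deleteIncidenceSet v ≤
        (G.deleteIncidenceSet v).deleteEdges F := fun u w ↦ by
      simp only [deleteIncidenceSet_adj, deleteEdges_adj]
      tauto
    obtain ⟨e, he⟩ :=
      (hG.mono (deleteEdges_le F)).exists_is3EdgeColorable_deleteEdges (hcol.mono hcomm)
    refine ⟨insert e F, ?_, ?_⟩
    · rw [Finset.card_insert_of_notMem hv]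
      exact (Finset.card_insert_le e F).trans (Nat.succ_le_succ hF)
    · rwa [Finset.coe_insert, Set.insert_eq, Set.union_comm, ← deleteEdges_deleteEdges]

theorem IsSubcubic.resistance_le_encard_compl (hG : IsSubcubic G) {s : Set V}
    (h : Is3EdgeColorable (G.induce s).spanningCoe) : (resistance G : ℕ∞) ≤ sᶜ.encard := by
  rcases sᶜ.finite_or_infinite with hfin | hinf
  · have hs : s = (↑hfin.toFinset)ᶜ := by simp
    obtain ⟨F, hF, hcol⟩ :=
      hG.exists_finset_is3EdgeColorable_deleteEdges hfin.toFinset (by rwa [← hs])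
    rw [hfin.encard_eq_coe_toFinset_card]
    exact_mod_cast (resistance_le_card hcol).trans hF
  · simp [hinf.encard_eq]

end VertexDeletion

section Cycles

variable {V : Type*} {G : SimpleGraph V} {u v x y : V}

theorem exists_isProper3EdgeColoring_of_isPath {p : G.Walk x y} (hp : p.IsPath) :
    ∃ c, IsProper3EdgeColoring p.toSubgraph.spanningCoe c ∧ ∀ e, c e ≠ 2 := by
  classical
  let index : V → ℕ := fun v ↦ p.support.idxOf v
  have hindex {i : ℕ} (hi : i ≤ p.length) : index (p.getVert i) = i := by
    have hi' : i < p.support.length := by simpa using Nat.lt_succ_of_le hi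
    simpa only [index, p.support_getElem_eq_getVert hi'] using hp.support_nodup.idxOf_getElem i hi'
  let c : Sym2 V → Fin 3 := fun e ↦ if Even (e.map index).inf then 0 else 1
  have hc {i : ℕ} (hi : i < p.length) :
      c s(p.getVert i, p.getVert (i + 1)) = if Even i then 0 else 1 := by
    simp [c, hindex hi.le, hindex hi]
  have hmem {i : ℕ} (hi : i < p.length) {v : V} (hv : v ∈ s(p.getVert i, p.getVert (i + 1))) :
      index v = i ∨ index v = i + 1 := by
    rcases Sym2.mem_iff.1 hv with rfl | rfl
    exacts [.inl (hindex hi.le), .inr (hindex hi)]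
  have hedge {e : Sym2 V} (he : e ∈ p.toSubgraph.spanningCoe.edgeSet) :
      ∃ i < p.length, s(p.getVert i, p.getVert (i + 1)) = e := by
    induction e using Sym2.ind with | _ a b
    obtain ⟨i, hi, hil⟩ := p.toSubgraph_adj_iff.1 he
    exact ⟨i, hil, hi⟩
  refine ⟨c, fun e₁ h₁ e₂ h₂ hne ↦ ?_, fun e ↦ by simp only [c]; split_ifs <;> decide⟩
  rintro ⟨v, hv₁, hv₂⟩
  obtain ⟨i, hi, rfl⟩ := hedge h₁
  obtain ⟨j, hj, rfl⟩ := hedge h₂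
  have hij : i ≠ j := by rintro rfl; exact hne rfl
  have hvi := hmem hi hv₁
  have hvj := hmem hj hv₂
  rw [hc hi, hc hj]
  grind

theorem exists_isPath_edges_of_isCycle {w : G.Walk u u} (hw : w.IsCycle) {e : Sym2 V}
    (he : e ∈ w.edges) :
    ∃ (x y : V) (p : G.Walk x y), p.IsPath ∧ ∀ e' ∈ w.edges, e' ≠ e → e' ∈ p.edges := by
  classical
  induction e using Sym2.ind with | _ x y
  have hx : x ∈ w.support := w.fst_mem_support_of_mem_edges he
  let r := w.rotate x hx
  have hr : r.IsCycle := hw.rotate hx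
  have hedges {e : Sym2 V} : e ∈ r.edges ↔ e ∈ w.edges := (w.rotate_edges x hx).mem_iff
  have hy : y ∈ r.toSubgraph.neighborSet x := by
    rw [Subgraph.mem_neighborSet, ← Subgraph.mem_edgeSet, Walk.mem_edges_toSubgraph]
    exact hedges.2 he
  rw [hr.neighborSet_toSubgraph_endpoint] at hy
  rcases hy with rfl | rfl
  · refine ⟨_, _, r.tail, hr.isPath_tail, fun e' he' hne ↦ ?_⟩
    rw [← hedges, ← r.cons_tail_eq hr.not_nil, Walk.edges_cons] at he'
    exact (List.mem_cons.1 he').resolve_left hne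
  · refine ⟨_, _, r.dropLast, hr.isPath_dropLast, fun e' he' hne ↦ ?_⟩
    rw [← hedges, ← Walk.concat_dropLast (r.adj_penultimate hr.not_nil), Walk.edges_concat,
      List.concat_eq_append] at he'
    simpa [Sym2.eq_swap, hne] using he'

theorem IsSubcubic.subsingleton_neighborSet_sdiff_toSubgraph (hG : IsSubcubic G)
    {w : G.Walk u u} (hw : w.IsCycle) (hv : v ∈ w.support) :
    (G.neighborSet v \ w.toSubgraph.neighborSet v).Subsingleton := by
  have htwo : (w.toSubgraph.neighborSet v).encard = 2 := by
    have hncard := hw.ncard_neighborSet_toSubgraph_eq_two hv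
    rw [← (Set.finite_of_ncard_ne_zero (by omega)).cast_ncard_eq, hncard, Nat.cast_ofNat]
  have hsum := Set.encard_sdiff_add_encard_of_subset (w.toSubgraph.neighborSet_subset v)
  rw [← Set.encard_le_one_iff_subsingleton]
  refine (ENat.add_le_add_iff_right (ENat.natCast_ne_top 2)).1 ?_
  calc (G.neighborSet v \ w.toSubgraph.neighborSet v).encard + 2
      = (G.neighborSet v).encard := by rw [← htwo, hsum]
    _ ≤ 1 + 2 := (hG v).trans_eq (by norm_num)

theorem IsSubcubic.is3EdgeColorable_induce_support_deleteEdges (hG : IsSubcubic G)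
    {w : G.Walk u u} (hw : w.IsCycle) {e : Sym2 V} (he : e ∈ w.edges) :
    Is3EdgeColorable ((G.deleteEdges {e}).induce {v | v ∈ w.support}).spanningCoe := by
  obtain ⟨x, y, p, hp, hwp⟩ := exists_isPath_edges_of_isCycle hw he
  obtain ⟨c, hc, hc2⟩ := exists_isProper3EdgeColoring_of_isPath hp
  refine is3EdgeColorable_of_subsingleton_neighborSet_sdiff hc hc2 fun v a ha b hb ↦ ?_
  have hchord {a : V}
      (ha : (((G.deleteEdges {e}).induce {v | v ∈ w.support}).spanningCoe \
        p.toSubgraph.spanningCoe).Adj v a) :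
      v ∈ w.support ∧ a ∈ G.neighborSet v \ w.toSubgraph.neighborSet v := by
    obtain ⟨hv, -, hadj⟩ := spanningCoe_induce_adj.1 ha.1
    obtain ⟨hadj, hne⟩ := deleteEdges_adj.1 hadj
    refine ⟨hv, hadj, fun haw ↦ ha.2 ?_⟩
    exact p.mem_edges_toSubgraph.2 (hwp _ (w.mem_edges_toSubgraph.1 haw) hne)
  exact hG.subsingleton_neighborSet_sdiff_toSubgraph hw (hchord ha).1 (hchord ha).2 (hchord hb).2

theorem exists_mem_edges_notMem_edgeSet {H : G.Subgraph} {w : G.Walk u u} (hw : w.IsCycle)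
    (h : ¬ CycleInSubgraph H w) : ∃ e ∈ w.edges, e ∉ H.edgeSet := by
  by_contra! hedges
  refine h ⟨hedges, fun v hv ↦ ?_⟩
  obtain ⟨e, he, hve⟩ := (Walk.mem_support_iff_exists_mem_edges_of_not_nil hw.not_nil).1 hv
  exact Subgraph.mem_verts_of_mem_edge (hedges e he) hve

theorem IsSubcubic.resistance_coe_le_encard_verts_sdiff_support (hG : IsSubcubic G)
    {H : G.Subgraph} {w : G.Walk u u} (hw : w.IsCycle) (h : ¬ CycleInSubgraph H w) :
    (resistance H.coe : ℕ∞) ≤ (H.verts \ {v | v ∈ w.support}).encard := by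
  obtain ⟨e, hew, heH⟩ := exists_mem_edges_notMem_edgeSet hw h
  let s : Set H.verts := Subtype.val ⁻¹' {v | v ∈ w.support}
  let f : (H.coe.induce s).spanningCoe →g
      ((G.deleteEdges {e}).induce {v | v ∈ w.support}).spanningCoe :=
    { toFun := Subtype.val
      map_rel' := fun {a b} hab ↦ by
        obtain ⟨ha, hb, hab⟩ := spanningCoe_induce_adj.1 hab
        refine spanningCoe_induce_adj.2 ⟨ha, hb, deleteEdges_adj.2 ⟨hab.adj_sub, ?_⟩⟩
        rintro rfl
        exact heH hab }
  have hcol : Is3EdgeColorable (H.coe.induce s).spanningCoe :=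
    (hG.is3EdgeColorable_induce_support_deleteEdges hw hew).of_injective_hom f
      Subtype.val_injective
  have himage : Subtype.val '' sᶜ = H.verts \ {v | v ∈ w.support} := by
    rw [← Set.preimage_compl, Subtype.image_preimage_coe, Set.sdiff_eq]
  calc (resistance H.coe : ℕ∞)
      ≤ sᶜ.encard :=
        (hG.of_injective_hom H.hom Subtype.val_injective).resistance_le_encard_compl hcol
    _ = (H.verts \ {v | v ∈ w.support}).encard := by
        rw [← himage, Subtype.val_injective.encard_image]

theorem encard_support_of_isCycle {w : G.Walk u u} (hw : w.IsCycle) :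
    {v | v ∈ w.support}.encard = w.length := by
  classical
  have htail : {v | v ∈ w.support} = ↑w.support.tail.toFinset := by
    ext v
    rw [Set.mem_ofPred_eq, Walk.mem_support_iff, List.coe_toFinset, Set.mem_ofPred_eq,
      or_iff_right_of_imp]
    rintro rfl
    exact w.end_mem_tail_support hw.not_nil
  rw [htail, Set.encard_coe_eq_coe_finsetCard, List.toFinset_card_of_nodup hw.support_nodup,
    List.length_tail, w.length_support, Nat.add_sub_cancel]

theorem mul_card_le_encard_biUnion {α ι : Type*} {A : ι → Set α} {T : Finset ι} {k : ℕ∞}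
    (hdisj : (T : Set ι).PairwiseDisjoint A) (hk : ∀ i ∈ T, k ≤ (A i).encard) :
    k * T.card ≤ (⋃ i ∈ T, A i).encard :=
  calc k * T.card
      = T.card • k := by rw [nsmul_eq_mul, mul_comm]
    _ ≤ ∑ i ∈ T, (A i).encard := T.card_nsmul_le_sum _ _ hk
    _ = ∑ᶠ i ∈ (T : Set ι), (A i).encard := (finsum_mem_coe_finset _ T).symm
    _ = (⋃ i ∈ T, A i).encard := (T.finite_toSet.encard_biUnion hdisj).symm

theorem length_add_mul_card_sub_one_le {ι : Type*} [Fintype ι] {k : ℕ∞} {H : ι → G.Subgraph}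
    (hdisj : Pairwise fun i j ↦ Disjoint (H i).verts (H j).verts) {w : G.Walk u u}
    (hw : w.IsCycle) (hmiss : ∀ i, ¬ CycleInSubgraph (H i) w →
      k ≤ ((H i).verts \ {v | v ∈ w.support}).encard) :
    w.length + k * (Fintype.card ι - 1 : ℕ) ≤ ENat.card V := by
  classical
  let T : Finset ι := {i | ¬ CycleInSubgraph (H i) w}
  let missed (i : ι) : Set V := (H i).verts \ {v | v ∈ w.support}
  have hcontaining : Tᶜ.card ≤ 1 := by
    refine Finset.card_le_one.2 fun i hi j hj ↦ ?_
    simp only [T, Finset.compl_filter, not_not, Finset.mem_filter_univ] at hi hj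
    by_contra hij
    exact (hdisj hij).notMem_of_mem_left (hi.2 u w.start_mem_support) (hj.2 u w.start_mem_support)
  have hT : Fintype.card ι - 1 ≤ T.card := by
    have := T.card_add_card_compl
    omega
  have hmissed : (T : Set ι).PairwiseDisjoint missed := fun i _ j _ hij ↦
    (hdisj hij).mono Set.sdiff_subset Set.sdiff_subset
  have hsupport : Disjoint {v | v ∈ w.support} (⋃ i ∈ T, missed i) :=
    Set.disjoint_iUnion₂_right.2 fun _ _ ↦ Set.disjoint_sdiff_right
  calc (w.length + k * (Fintype.card ι - 1 : ℕ) : ℕ∞)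
      ≤ w.length + k * T.card := by gcongr
    _ ≤ {v | v ∈ w.support}.encard + (⋃ i ∈ T, missed i).encard := by
        rw [encard_support_of_isCycle hw]
        gcongr
        exact mul_card_le_encard_biUnion hmissed fun i hi ↦ hmiss i (Finset.mem_filter.1 hi).2
    _ = ({v | v ∈ w.support} ∪ ⋃ i ∈ T, missed i).encard := (Set.encard_union_eq hsupport).symm
    _ ≤ ENat.card V := Set.encard_le_card

end Cycles

theorem circumference_le_of_forall_isCycle {V : Type*} {G : SimpleGraph V} {n : ℕ∞}
    (h : ∀ (u : V) (w : G.Walk u u), w.IsCycle → (w.length : ℕ∞) ≤ n) :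
    (circumference G : ℕ∞) ≤ n := by
  cases n with
  | top => exact le_top
  | coe n =>
    refine Nat.cast_le.2 (csSup_le' ?_)
    rintro _ ⟨u, w, hw, rfl⟩
    exact Nat.cast_le.1 (h u w hw)

theorem stmt_14_general {V ι : Type*} [Fintype ι] (G : SimpleGraph V) (hG : IsSubcubic G) (k : ℕ)
    (H : ι → G.Subgraph) (hdisj : Pairwise fun i j ↦ Disjoint (H i).verts (H j).verts)
    (hres : ∀ i, k ≤ resistance (H i).coe) :
    (∀ (u : V) (w : G.Walk u u), w.IsCycle → ∀ i, CycleInSubgraph (H i) w ∨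
      (k : ℕ∞) ≤ ((H i).verts \ {v | v ∈ w.support}).encard) ∧
    (circumference G : ℕ∞) ≤ ENat.card V - (k * (Fintype.card ι - 1) : ℕ) := by
  have hmiss (u : V) (w : G.Walk u u) (hw : w.IsCycle) (i : ι) (hi : ¬ CycleInSubgraph (H i) w) :
      (k : ℕ∞) ≤ ((H i).verts \ {v | v ∈ w.support}).encard :=
    (Nat.cast_le.2 (hres i)).trans (hG.resistance_coe_le_encard_verts_sdiff_support hw hi)
  refine ⟨fun u w hw i ↦ or_iff_not_imp_left.2 (hmiss u w hw i),
    circumference_le_of_forall_isCycle fun u w hw ↦ ?_⟩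
  refine ENat.le_sub_of_add_le_right (ENat.natCast_ne_top _) ?_
  rw [Nat.cast_mul]
  exact length_add_mul_card_sub_one_le hdisj hw (hmiss u w hw)

/-- If a bridgeless cubic graph G contains m ≥ 2 pairwise vertex-disjoint subgraphs of
resistance at least k such that no cycle is contained in more than one of them, then
every cycle of G is contained in one of them or misses at least k vertices of each of
them, and consequently the circumference of G is at most |V(G)| − k(m−1). -/
theorem stmt_14 {V : Type*} [Fintype V] (G : SimpleGraph V)
    (hcubic : ∀ v, (G.neighborSet v).ncard = 3)
    (hbridgeless : ∀ e ∈ G.edgeSet, ¬ G.IsBridge e)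
    (m k : ℕ) (hm : 2 ≤ m) (H : Fin m → G.Subgraph)
    (hdisj : ∀ i j, i ≠ j → Disjoint (H i).verts (H j).verts)
    (hres : ∀ i, k ≤ resistance (H i).coe)
    (honce : ∀ (u : V) (w : G.Walk u u), w.IsCycle →
      ∀ i j, CycleInSubgraph (H i) w → CycleInSubgraph (H j) w → i = j) :
    (∀ (u : V) (w : G.Walk u u), w.IsCycle →
      (∃ i, CycleInSubgraph (H i) w) ∨
        ∀ i, k ≤ ((H i).verts \ {v | v ∈ w.support}).ncard) ∧
    circumference G ≤ Fintype.card V - k * (m - 1) := by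
  have hG : IsSubcubic G := fun v ↦ by
    rw [← (Set.toFinite _).cast_ncard_eq, hcubic v, Nat.cast_ofNat]
  obtain ⟨hcycle, hcirc⟩ := stmt_14_general G hG k H (fun i j ↦ hdisj i j) hres
  refine ⟨fun u w hw ↦ or_iff_not_imp_left.2 fun hnot i ↦ ?_, ?_⟩
  · have hmiss := (hcycle u w hw i).resolve_left (not_exists.1 hnot i)
    rwa [← (Set.toFinite _).cast_ncard_eq, Nat.cast_le] at hmiss
  · rwa [ENat.card_eq_coe_fintype_card, Fintype.card_fin, ← ENat.natCast_sub, Nat.cast_le] at hcirc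
end
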